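/- For every rational number α with 0 < α ≤ 1, there exists a finite semigroup S with χ(S) = α. -/

import Mathlib

/-- A relation `ρ` is a *diagonal subsemigroup* with respect to multiplication `mul`:
it is reflexive and compatible with `mul`. -/
def IsDiagonal {S : Type*} (mul : S → S → S) (ρ : S → S → Prop) : Prop :=
  (∀ s, ρ s s) ∧ ∀ a b c d, ρ a b → ρ c d → ρ (mul a c) (mul b d)

/-- A relation `ρ` is a *congruence* with respect to `mul`. -/
def IsCongruence {S : Type*} (mul : S → S → S) (ρ : S → S → Prop) : Prop :=
  Equivalence ρ ∧ ∀ a b c d, ρ a b → ρ c d → ρ (mul a c) (mul b d)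

/-- The DSC coefficient: the number of congruences divided by the number of
diagonal subsemigroups. -/
noncomputable def chi {S : Type*} (mul : S → S → S) : ℚ :=
  (Nat.card {ρ : S → S → Prop // IsCongruence mul ρ} : ℚ) /
  (Nat.card {ρ : S → S → Prop // IsDiagonal mul ρ} : ℚ)

/-- The DSC coefficient of a semigroup. -/
noncomputable def chiSemigroup (S : Type*) [Semigroup S] : ℚ :=
  chi (fun a b : S => a * b)

/-!
Let `S` be the Rees matrix semigroup over a finite group `G` with a sandwich matrix normalized at
`(l₀, i₀)`. Every `(i, g, l)` factors as `(i, 1, l₀) * (i₀, g, l₀) * (i₀, 1, l)`, and a reflexive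
compatible relation on a finite group is automatically a congruence, so a diagonal subsemigroup of
`S` amounts to a reflexive relation on the rows, a congruence `c` of `G` and a reflexive relation
on the columns, linked through the sandwich matrix; it is a congruence exactly when both relations
are equivalences.

If the sandwich matrix is `γ` on the diagonal except at `(i₀, i₀)` and `1` elsewhere, being linked
means that `c` identifies `γ` with `1` or that both relations are equalities. Hence
`χ(S) = (t + m * B ^ 2) / (t + m * E ^ 2)`, where `B` and `E` count the equivalence relations and
the reflexive relations on the index set, and `m`, `t` count the congruences of `G` which do,
respectively do not, identify `γ` with `1`. Cyclic groups of prime power order realize every pair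
`m ≥ 1`, `t ≥ 0`, and for `α = a / b < 1` the choice `m = b - a`, `t = a * E ^ 2 - b * B ^ 2` gives
`χ(S) = α`. An index set with `b` elements makes `t` nonnegative.
-/

theorem finite_con (M : Type*) [Mul M] [Finite M] : Finite (Con M) :=
  Finite.of_injective (fun c : Con M => (c : M → M → Prop)) DFunLike.coe_injective

section Torsion

variable {S G : Type*}

theorem IsDiagonal.refl {mul : S → S → S} {ρ : S → S → Prop} (hρ : IsDiagonal mul ρ) (s : S) :
    ρ s s :=
  hρ.1 s

theorem IsDiagonal.mul [Mul S] {ρ : S → S → Prop} (hρ : IsDiagonal (fun a b : S => a * b) ρ)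
    {a b c d : S} (hab : ρ a b) (hcd : ρ c d) : ρ (a * c) (b * d) :=
  hρ.2 a b c d hab hcd

theorem isCongruence_iff_isDiagonal_and_equivalence {mul : S → S → S} {ρ : S → S → Prop} :
    IsCongruence mul ρ ↔ IsDiagonal mul ρ ∧ Equivalence ρ :=
  ⟨fun h => ⟨⟨h.1.refl, h.2⟩, h.1⟩, fun h => ⟨h.2, h.1.2⟩⟩

theorem IsDiagonal.equivalence_of_isMulTorsion [Group G] (hG : IsMulTorsion G)
    {ρ : G → G → Prop} (hρ : IsDiagonal (fun a b : G => a * b) ρ) : Equivalence ρ where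
  refl := hρ.refl
  symm {a b} hab := by
    -- A submonoid of a torsion group is closed under inverses.
    let M : Submonoid G :=
      { carrier := {n | ρ 1 n}
        one_mem' := hρ.refl 1
        mul_mem' := fun hm hn => by simpa using hρ.mul hm hn }
    have hM : a⁻¹ * b ∈ M := by simpa [M] using hρ.mul (hρ.refl a⁻¹) hab
    have hinv : (a⁻¹ * b)⁻¹ ∈ M :=
      Submonoid.powers_le.2 hM <|
        (hG (a⁻¹ * b)).mem_powers_iff_mem_zpowers.2 (inv_mem (Subgroup.mem_zpowers _))
    simpa [M] using hρ.mul (hρ.refl b) hinv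
  trans {a b c} hab hbc := by
    simpa using hρ.mul (hρ.mul hab (hρ.refl b⁻¹)) hbc

theorem IsDiagonal.isCongruence_of_isMulTorsion [Group G] (hG : IsMulTorsion G)
    {ρ : G → G → Prop} (hρ : IsDiagonal (fun a b : G => a * b) ρ) :
    IsCongruence (fun a b : G => a * b) ρ :=
  isCongruence_iff_isDiagonal_and_equivalence.2 ⟨hρ, hρ.equivalence_of_isMulTorsion hG⟩

theorem chiSemigroup_eq_ncard_div_ncard (S : Type*) [Semigroup S] :
    chiSemigroup S = ({ρ | IsCongruence (fun a b : S => a * b) ρ}.ncard : ℚ) /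
      {ρ | IsDiagonal (fun a b : S => a * b) ρ}.ncard :=
  rfl

theorem chiSemigroup_eq_one_of_finite_group (G : Type*) [Group G] [Finite G] :
    chiSemigroup G = 1 := by
  have hset : {ρ | IsCongruence (fun a b : G => a * b) ρ} =
      {ρ | IsDiagonal (fun a b : G => a * b) ρ} :=
    Set.ext fun ρ => ⟨fun h => (isCongruence_iff_isDiagonal_and_equivalence.1 h).1,
      IsDiagonal.isCongruence_of_isMulTorsion isMulTorsion_of_finite⟩
  have hne : {ρ | IsDiagonal (fun a b : G => a * b) ρ}.Nonempty :=
    ⟨fun _ _ => True, fun _ => trivial, fun _ _ _ _ _ _ => trivial⟩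
  rw [chiSemigroup_eq_ncard_div_ncard, hset]
  exact div_self (Nat.cast_ne_zero.2 ((Set.ncard_pos).2 hne).ne')

end Torsion

/-- The underlying set `I × G × Λ` of the Rees matrix semigroup `M(G; I, Λ; P)` with sandwich matrix
`P`. The matrix is a parameter of the type because it determines the multiplication. -/
@[ext]
structure ReesMatrix {I Λ G : Type*} (P : Λ → I → G) where
  row : I
  val : G
  col : Λ

namespace ReesMatrix

variable {I Λ G : Type*}

instance [Finite I] [Finite Λ] [Finite G] (P : Λ → I → G) : Finite (ReesMatrix P) :=
  Finite.of_injective (fun x => (x.row, x.val, x.col)) fun x y h => by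
    simpa [ReesMatrix.ext_iff] using h

instance [Semigroup G] (P : Λ → I → G) : Semigroup (ReesMatrix P) where
  mul x y := ⟨x.row, x.val * P x.col y.row * y.val, y.col⟩
  mul_assoc x y z := by
    refine ReesMatrix.ext rfl ?_ rfl
    change x.val * P x.col y.row * y.val * P y.col z.row * z.val =
      x.val * P x.col y.row * (y.val * P y.col z.row * z.val)
    simp only [mul_assoc]

@[simp]
theorem mk_mul_mk [Semigroup G] (P : Λ → I → G) (i j : I) (g h : G) (l m : Λ) :
    (⟨i, g, l⟩ * ⟨j, h, m⟩ : ReesMatrix P) = ⟨i, g * P l j * h, m⟩ :=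
  rfl

/-- The relation on a Rees matrix semigroup that compares rows by `R`, group entries by the
congruence `c`, and columns by `Q`. -/
def tripleRel [Mul G] {P : Λ → I → G} (R : I → I → Prop) (c : Con G) (Q : Λ → Λ → Prop)
    (x y : ReesMatrix P) : Prop :=
  R x.row y.row ∧ c x.val y.val ∧ Q x.col y.col

/-- The linking condition on a triple `(R, c, Q)`: modulo `c`, related rows index equal columns of
the sandwich matrix `P`, and related columns index equal rows of `P`. This is the compatibility that
makes `tripleRel R c Q` respect multiplication. -/
structure IsLinked [Mul G] (P : Λ → I → G) (R : I → I → Prop) (c : Con G) (Q : Λ → Λ → Prop) :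
    Prop where
  row : ∀ i j, R i j → ∀ l, c (P l i) (P l j)
  col : ∀ l m, Q l m → ∀ i, c (P l i) (P m i)

/-- The linked triples `(R, c, Q)` whose relations `R` on the rows and `Q` on the columns are drawn
from `𝓡` and `𝓠`. They parametrize compatible relations on the Rees matrix semigroup. -/
def linkedTriples [Mul G] (P : Λ → I → G) (𝓡 : Set (I → I → Prop)) (𝓠 : Set (Λ → Λ → Prop)) :
    Set ((I → I → Prop) × Con G × (Λ → Λ → Prop)) :=
  {t | t.1 ∈ 𝓡 ∧ IsLinked P t.1 t.2.1 t.2.2 ∧ t.2.2 ∈ 𝓠}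

/-- The sandwich matrix `P` is normalized at `(l₀, i₀)` if row `l₀` and column `i₀` of `P` consist
of ones. -/
structure IsNormalized [One G] (P : Λ → I → G) (i₀ : I) (l₀ : Λ) : Prop where
  row : ∀ i, P l₀ i = 1
  col : ∀ l, P l i₀ = 1

/-- The relation induced by `ρ` on rows, read off on the elements `(i, 1, l₀)`. -/
def rowRel [One G] {P : Λ → I → G} (l₀ : Λ)
    (ρ : ReesMatrix P → ReesMatrix P → Prop) : I → I → Prop :=
  Function.onFun ρ fun i => ⟨i, 1, l₀⟩

/-- The relation induced by `ρ` on columns, read off on the elements `(i₀, 1, l)`. -/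
def colRel [One G] {P : Λ → I → G} (i₀ : I)
    (ρ : ReesMatrix P → ReesMatrix P → Prop) : Λ → Λ → Prop :=
  Function.onFun ρ fun l => ⟨i₀, 1, l⟩

section TripleRel

variable {P : Λ → I → G} {R R' : I → I → Prop} {Q Q' : Λ → Λ → Prop}

theorem IsLinked.isDiagonal_tripleRel [Semigroup G] {c : Con G} (h : IsLinked P R c Q)
    (hR : Std.Refl R) (hQ : Std.Refl Q) :
    IsDiagonal (fun x y : ReesMatrix P => x * y) (tripleRel R c Q) := by
  refine ⟨fun x => ⟨hR.refl _, c.refl _, hQ.refl _⟩, ?_⟩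
  rintro ⟨i, g, l⟩ ⟨i', g', l'⟩ ⟨j, k, m⟩ ⟨j', k', m'⟩ ⟨hi, hg, hl⟩ ⟨hj, hk, hm⟩
  have hP : c (P l j) (P l' j') := c.trans (h.row j j' hj l) (h.col l l' hl j')
  exact ⟨hi, c.mul (c.mul hg hP) hk, hm⟩

theorem equivalence_tripleRel [Mul G] (hR : Equivalence R) (c : Con G) (hQ : Equivalence Q) :
    Equivalence (tripleRel (P := P) R c Q) where
  refl _ := ⟨hR.refl _, c.refl _, hQ.refl _⟩
  symm h := ⟨hR.symm h.1, c.symm h.2.1, hQ.symm h.2.2⟩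
  trans h h' := ⟨hR.trans h.1 h'.1, c.trans h.2.1 h'.2.1, hQ.trans h.2.2 h'.2.2⟩

theorem tripleRel_injective [Mul G] [Nonempty I] [Nonempty Λ] [Nonempty G] {c c' : Con G}
    (hR : Std.Refl R) (hQ : Std.Refl Q) (hR' : Std.Refl R') (hQ' : Std.Refl Q')
    (h : tripleRel (P := P) R c Q = tripleRel R' c' Q') : R = R' ∧ c = c' ∧ Q = Q' := by
  have key (x y : ReesMatrix P) : tripleRel R c Q x y ↔ tripleRel R' c' Q' x y := by rw [h]
  inhabit I; inhabit Λ; inhabit G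
  refine ⟨?_, ?_, ?_⟩
  · ext i j
    simpa [tripleRel, refl_of, c.refl, c'.refl] using
      key ⟨i, default, default⟩ ⟨j, default, default⟩
  · ext g k
    simpa [tripleRel, refl_of, c.refl, c'.refl] using
      key ⟨default, g, default⟩ ⟨default, k, default⟩
  · ext l m
    simpa [tripleRel, refl_of, c.refl, c'.refl] using
      key ⟨default, default, l⟩ ⟨default, default, m⟩

end TripleRel

section Classification

variable [Group G] {P : Λ → I → G} {i₀ : I} {l₀ : Λ} {ρ : ReesMatrix P → ReesMatrix P → Prop}

/-- The congruence induced by a diagonal subsemigroup `ρ` on the structure group, which is embedded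
as the elements `(i₀, g, l₀)`. -/
def valCon (hG : IsMulTorsion G) (hP : IsNormalized P i₀ l₀)
    (hρ : IsDiagonal (fun x y : ReesMatrix P => x * y) ρ) : Con G where
  r g h := ρ ⟨i₀, g, l₀⟩ ⟨i₀, h, l₀⟩
  iseqv := IsDiagonal.equivalence_of_isMulTorsion hG
    ⟨fun _ => hρ.refl _, fun _ _ _ _ hab hcd => by simpa [hP.col] using hρ.mul hab hcd⟩
  mul' hab hcd := by simpa [hP.col] using hρ.mul hab hcd

@[simp]
theorem valCon_apply (hG : IsMulTorsion G) (hP : IsNormalized P i₀ l₀)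
    (hρ : IsDiagonal (fun x y : ReesMatrix P => x * y) ρ) (g h : G) :
    valCon hG hP hρ g h ↔ ρ ⟨i₀, g, l₀⟩ ⟨i₀, h, l₀⟩ :=
  Iff.rfl

theorem isLinked_of_isDiagonal (hG : IsMulTorsion G) (hP : IsNormalized P i₀ l₀)
    (hρ : IsDiagonal (fun x y : ReesMatrix P => x * y) ρ) :
    IsLinked P (rowRel l₀ ρ) (valCon hG hP hρ) (colRel i₀ ρ) where
  row i j hij l := by simpa using hρ.mul (hρ.refl ⟨i₀, 1, l⟩) hij
  col l m hlm i := by simpa using hρ.mul hlm (hρ.refl ⟨i, 1, l₀⟩)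

theorem valCon_of_rel (hG : IsMulTorsion G) (hP : IsNormalized P i₀ l₀)
    (hρ : IsDiagonal (fun x y : ReesMatrix P => x * y) ρ) {x y : ReesMatrix P} (hxy : ρ x y) :
    valCon hG hP hρ x.val y.val := by
  obtain ⟨i, g, l⟩ := x
  obtain ⟨j, h, m⟩ := y
  simpa [hP.row, hP.col] using
    hρ.mul (hρ.mul (hρ.refl ⟨i₀, 1, l₀⟩) hxy) (hρ.refl ⟨i₀, 1, l₀⟩)

theorem tripleRel_rowRel_valCon_colRel (hG : IsMulTorsion G) (hP : IsNormalized P i₀ l₀)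
    (hρ : IsDiagonal (fun x y : ReesMatrix P => x * y) ρ) :
    tripleRel (rowRel l₀ ρ) (valCon hG hP hρ) (colRel i₀ ρ) = ρ := by
  ext ⟨i, g, l⟩ ⟨j, h, m⟩
  constructor
  · rintro ⟨hij, hgh, hlm⟩
    simpa [hP.row, hP.col] using hρ.mul (hρ.mul hij hgh) hlm
  · intro hxy
    have hgh : valCon hG hP hρ g h := valCon_of_rel hG hP hρ hxy
    have hinv : ρ ⟨i₀, g⁻¹, l₀⟩ ⟨i₀, h⁻¹, l₀⟩ := (valCon hG hP hρ).inv hgh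
    refine ⟨?_, hgh, ?_⟩
    · simpa [rowRel, Function.onFun, hP.col] using hρ.mul hxy hinv
    · simpa [colRel, Function.onFun, hP.row] using hρ.mul hinv hxy

theorem bijOn_tripleRel_isDiagonal (hG : IsMulTorsion G) (hP : IsNormalized P i₀ l₀) :
    Set.BijOn
      (fun t : (I → I → Prop) × Con G × (Λ → Λ → Prop) => tripleRel (P := P) t.1 t.2.1 t.2.2)
      (linkedTriples P {R | Std.Refl R} {Q | Std.Refl Q})
      {ρ | IsDiagonal (fun x y : ReesMatrix P => x * y) ρ} := by
  have : Nonempty I := ⟨i₀⟩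
  have : Nonempty Λ := ⟨l₀⟩
  refine ⟨fun t ht => ht.2.1.isDiagonal_tripleRel ht.1 ht.2.2, ?_, ?_⟩
  · rintro ⟨R, c, Q⟩ ⟨hR, -, hQ⟩ ⟨R', c', Q'⟩ ⟨hR', -, hQ'⟩ h
    obtain ⟨rfl, rfl, rfl⟩ := tripleRel_injective hR hQ hR' hQ' h
    rfl
  · intro ρ hρ
    exact ⟨(rowRel l₀ ρ, valCon hG hP hρ, colRel i₀ ρ),
      ⟨⟨fun _ => hρ.refl _⟩, isLinked_of_isDiagonal hG hP hρ, ⟨fun _ => hρ.refl _⟩⟩,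
      tripleRel_rowRel_valCon_colRel hG hP hρ⟩

theorem bijOn_tripleRel_isCongruence (hG : IsMulTorsion G) (hP : IsNormalized P i₀ l₀) :
    Set.BijOn
      (fun t : (I → I → Prop) × Con G × (Λ → Λ → Prop) => tripleRel (P := P) t.1 t.2.1 t.2.2)
      (linkedTriples P {R | Equivalence R} {Q | Equivalence Q})
      {ρ | IsCongruence (fun x y : ReesMatrix P => x * y) ρ} := by
  refine ⟨?_, (bijOn_tripleRel_isDiagonal hG hP).injOn.mono ?_, ?_⟩
  · rintro ⟨R, c, Q⟩ ⟨hR, h, hQ⟩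
    exact isCongruence_iff_isDiagonal_and_equivalence.2
      ⟨h.isDiagonal_tripleRel hR.stdRefl hQ.stdRefl, equivalence_tripleRel hR c hQ⟩
  · exact fun t ht => ⟨ht.1.stdRefl, ht.2.1, ht.2.2.stdRefl⟩
  · intro ρ hρ
    obtain ⟨hd, he⟩ := isCongruence_iff_isDiagonal_and_equivalence.1 hρ
    exact ⟨(rowRel l₀ ρ, valCon hG hP hd, colRel i₀ ρ),
      ⟨he.comap _, isLinked_of_isDiagonal hG hP hd, he.comap _⟩,
      tripleRel_rowRel_valCon_colRel hG hP hd⟩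

end Classification

section DiagonalSandwich

variable [DecidableEq I]

/-- The square sandwich matrix with entry `γ` on the diagonal outside `(i₀, i₀)` and `1` elsewhere.
It is normalized, and `γ` is the only obstruction to linking. -/
def diagonalSandwich [One G] (i₀ : I) (γ : G) (l i : I) : G :=
  if l = i ∧ i ≠ i₀ then γ else 1

theorem diagonalSandwich_comm [One G] (i₀ : I) (γ : G) (l i : I) :
    diagonalSandwich i₀ γ l i = diagonalSandwich i₀ γ i l := by
  grind [diagonalSandwich]

theorem isNormalized_diagonalSandwich [One G] (i₀ : I) (γ : G) :
    IsNormalized (diagonalSandwich i₀ γ) i₀ i₀ where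
  row i := by grind [diagonalSandwich]
  col l := by grind [diagonalSandwich]

theorem eq_of_forall_con_diagonalSandwich [MulOneClass G] {i₀ : I} {γ : G} {c : Con G}
    (hγ : ¬c γ 1) {i j : I}
    (h : ∀ l, c (diagonalSandwich i₀ γ l i) (diagonalSandwich i₀ γ l j)) : i = j := by
  by_contra hij
  by_cases hi : i = i₀
  · have hj : j ≠ i₀ := fun hj => hij (hi.trans hj.symm)
    exact hγ (c.symm (by simpa [diagonalSandwich, hj, Ne.symm hij] using h j))
  · exact hγ (by simpa [diagonalSandwich, hi, hij] using h i)

theorem con_diagonalSandwich_of_con [MulOneClass G] {i₀ : I} {γ : G} {c : Con G} (hγ : c γ 1)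
    (l i l' i' : I) :
    c (diagonalSandwich i₀ γ l i) (diagonalSandwich i₀ γ l' i') := by
  have h (l i : I) : c (diagonalSandwich i₀ γ l i) 1 := by
    unfold diagonalSandwich
    split_ifs
    exacts [hγ, c.refl 1]
  exact c.trans (h l i) (c.symm (h l' i'))

theorem isLinked_diagonalSandwich_iff [MulOneClass G] {i₀ : I} {γ : G} {c : Con G}
    {R Q : I → I → Prop} (hR : Std.Refl R) (hQ : Std.Refl Q) :
    IsLinked (diagonalSandwich i₀ γ) R c Q ↔ c γ 1 ∨ R = Eq ∧ Q = Eq := by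
  constructor
  · intro h
    by_cases hγ : c γ 1
    · exact Or.inl hγ
    have hRij (i j : I) (hij : R i j) : i = j :=
      eq_of_forall_con_diagonalSandwich hγ (h.row i j hij)
    have hQlm (l m : I) (hlm : Q l m) : l = m := by
      refine eq_of_forall_con_diagonalSandwich (i₀ := i₀) hγ fun i => ?_
      rw [diagonalSandwich_comm i₀ γ i l, diagonalSandwich_comm i₀ γ i m]
      exact h.col l m hlm i
    refine Or.inr ⟨?_, ?_⟩
    · ext i j
      exact ⟨hRij i j, fun hij => hij ▸ hR.refl i⟩
    · ext l m
      exact ⟨hQlm l m, fun hlm => hlm ▸ hQ.refl l⟩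
  · rintro (hγ | ⟨rfl, rfl⟩)
    · exact ⟨fun i j _ l => con_diagonalSandwich_of_con hγ l i l j,
        fun l m _ i => con_diagonalSandwich_of_con hγ l i m i⟩
    · exact ⟨fun i j hij l => hij ▸ c.refl _, fun l m hlm i => hlm ▸ c.refl _⟩

theorem ncard_linkedTriples_diagonalSandwich [MulOneClass G] [Finite I] [Finite G] (i₀ : I)
    (γ : G) {𝓡 : Set (I → I → Prop)} (hEq : Eq ∈ 𝓡) (hrefl : ∀ R ∈ 𝓡, Std.Refl R) :
    (linkedTriples (diagonalSandwich i₀ γ) 𝓡 𝓡).ncard =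
      {c : Con G | ¬c γ 1}.ncard + {c : Con G | c γ 1}.ncard * 𝓡.ncard ^ 2 := by
  have hsplit : linkedTriples (diagonalSandwich i₀ γ) 𝓡 𝓡 =
      {Eq} ×ˢ {c : Con G | ¬c γ 1} ×ˢ {Eq} ∪ 𝓡 ×ˢ {c : Con G | c γ 1} ×ˢ 𝓡 := by
    ext ⟨R, c, Q⟩
    have hlink (hR : R ∈ 𝓡) (hQ : Q ∈ 𝓡) := isLinked_diagonalSandwich_iff (i₀ := i₀) (γ := γ)
      (c := c) (hrefl R hR) (hrefl Q hQ)
    simp only [linkedTriples, Set.mem_ofPred_eq, Set.mem_union, Set.mem_prod, Set.mem_singleton_iff]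
    grind
  have hdisj : Disjoint ({Eq} ×ˢ {c : Con G | ¬c γ 1} ×ˢ {Eq})
      (𝓡 ×ˢ {c : Con G | c γ 1} ×ˢ 𝓡) :=
    Set.disjoint_left.2 fun _ h h' => h.2.1 h'.2.1
  have : Finite (Con G) := finite_con G
  rw [hsplit, Set.ncard_union_eq hdisj]
  simp only [Set.ncard_prod, Set.ncard_singleton]
  ring

theorem chiSemigroup_diagonalSandwich [Group G] [Finite I] [Finite G] (i₀ : I) (γ : G) :
    chiSemigroup (ReesMatrix (diagonalSandwich i₀ γ)) =
      (({c : Con G | ¬c γ 1}.ncard : ℚ) +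
        {c : Con G | c γ 1}.ncard * {R : I → I → Prop | Equivalence R}.ncard ^ 2) /
      ({c : Con G | ¬c γ 1}.ncard +
        {c : Con G | c γ 1}.ncard * {R : I → I → Prop | Std.Refl R}.ncard ^ 2) := by
  have hP := isNormalized_diagonalSandwich i₀ γ
  have hcong := (bijOn_tripleRel_isCongruence isMulTorsion_of_finite hP).ncard_eq.symm.trans
    (ncard_linkedTriples_diagonalSandwich i₀ γ (𝓡 := {R | Equivalence R}) eq_equivalence
      fun _ hR => hR.stdRefl)
  have hdiag := (bijOn_tripleRel_isDiagonal isMulTorsion_of_finite hP).ncard_eq.symm.trans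
    (ncard_linkedTriples_diagonalSandwich i₀ γ (𝓡 := {R | Std.Refl R}) ⟨fun _ => rfl⟩
      fun _ hR => hR)
  rw [chiSemigroup_eq_ncard_div_ncard, hcong, hdiag]
  push_cast
  rfl

end DiagonalSandwich

end ReesMatrix

section Relations

theorem equivalence_eq_of_forall_lt {I : Type*} [LinearOrder I] {R R' : I → I → Prop}
    (hR : Equivalence R) (hR' : Equivalence R') (h : ∀ i j, i < j → (R i j ↔ R' i j)) :
    R = R' := by
  ext i j
  rcases lt_trichotomy i j with hij | rfl | hji
  · exact h i j hij
  · exact iff_of_true (hR.refl i) (hR'.refl i)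
  · exact ⟨fun hr => hR'.symm ((h j i hji).1 (hR.symm hr)),
      fun hr => hR.symm ((h j i hji).2 (hR'.symm hr))⟩

variable (I : Type*) [Finite I]

theorem natCard_le_ncard_equivalence :
    Nat.card I ≤ {R : I → I → Prop | Equivalence R}.ncard := by
  classical
  rcases isEmpty_or_nonempty I with _ | ⟨⟨i₀⟩⟩
  · simp
  -- `f i` identifies `i` with `i₀` and nothing else.
  let f (i : I) : {R : I → I → Prop | Equivalence R} :=
    ⟨fun x y => Function.update id i i₀ x = Function.update id i i₀ y,
      (Setoid.ker (Function.update id i i₀)).iseqv⟩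
  have eq_of_ne {i j : I} (h : f i = f j) (hij : i ≠ j) : i = i₀ := by
    have hi : (f i).1 i i₀ := by simp [f, Function.update_apply]
    rw [h] at hi
    simpa [f, Function.update_apply, hij] using hi
  refine Nat.card_le_card_of_injective f fun i j h => ?_
  by_contra hij
  exact hij ((eq_of_ne h hij).trans (eq_of_ne h.symm (Ne.symm hij)).symm)

theorem ncard_equivalence_sq_le_ncard_refl :
    {R : I → I → Prop | Equivalence R}.ncard ^ 2 ≤ {R : I → I → Prop | Std.Refl R}.ncard := by
  classical
  let _ : LinearOrder I := linearOrderOfSTO WellOrderingRel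
  -- An equivalence relation is determined by its part above the diagonal, so two of them can be
  -- stored above and below the diagonal of a single reflexive relation.
  let f (p : (I → I → Prop) × (I → I → Prop)) (i j : I) : Prop :=
    i ≤ j ∧ p.1 i j ∨ j ≤ i ∧ p.2 j i
  have f_of_lt (p) {i j : I} (hij : i < j) : f p i j ↔ p.1 i j := by
    simp [f, hij.le, hij.not_ge]
  have f_of_gt (p) {i j : I} (hij : i < j) : f p j i ↔ p.2 i j := by
    simp [f, hij.le, hij.not_ge]
  have hf : Set.InjOn f ({R | Equivalence R} ×ˢ {R | Equivalence R}) := by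
    rintro ⟨R, Q⟩ ⟨hR, hQ⟩ ⟨R', Q'⟩ ⟨hR', hQ'⟩ h
    refine Prod.ext (equivalence_eq_of_forall_lt hR hR' fun i j hij => ?_)
      (equivalence_eq_of_forall_lt hQ hQ' fun i j hij => ?_)
    · rw [← f_of_lt (R, Q) hij, h, f_of_lt _ hij]
    · rw [← f_of_gt (R, Q) hij, h, f_of_gt _ hij]
  rw [sq, ← Set.ncard_prod]
  exact Set.ncard_le_ncard_of_injOn f (fun p hp => ⟨fun i => Or.inl ⟨le_rfl, hp.1.refl i⟩⟩) hf

theorem natCard_mul_ncard_equivalence_sq_le :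
    Nat.card I * {R : I → I → Prop | Equivalence R}.ncard ^ 2 ≤
      {R : I → I → Prop | Std.Refl R}.ncard ^ 2 := by
  set B := {R : I → I → Prop | Equivalence R}.ncard
  set E := {R : I → I → Prop | Std.Refl R}.ncard
  have hI : Nat.card I ≤ B := natCard_le_ncard_equivalence I
  have hBE : B ^ 2 ≤ E := ncard_equivalence_sq_le_ncard_refl I
  calc Nat.card I * B ^ 2 ≤ B ^ 2 * B ^ 2 := by
        gcongr
        exact hI.trans (Nat.le_self_pow two_ne_zero B)
    _ ≤ E * E := by gcongr
    _ = E ^ 2 := (sq E).symm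

end Relations

section Cyclic

theorem ker_powMonoidHom_prime_pow_apply_one_iff {M : Type*} [CommMonoid M] {p t : ℕ}
    (hp : p.Prime) {γ : M} (hγ : orderOf γ = p ^ t) (j : ℕ) :
    Con.ker (powMonoidHom (p ^ j) : M →* M) γ 1 ↔ t ≤ j := by
  rw [Con.ker_apply, map_one, powMonoidHom_apply, ← orderOf_dvd_iff_pow_eq_one, hγ,
    Nat.pow_dvd_pow_iff_le_right hp.one_lt]

variable {G : Type*} [CommGroup G] [IsCyclic G] [Finite G] {p n t : ℕ}

theorem subgroup_eq_ker_powMonoidHom_natCard (N : Subgroup G) :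
    N = (powMonoidHom (Nat.card N) : G →* G).ker := by
  refine Subgroup.eq_of_le_of_card_ge (fun g hg => ?_) ?_
  · exact orderOf_dvd_iff_pow_eq_one.1 (N.orderOf_dvd_natCard hg)
  · rw [IsCyclic.card_powMonoidHom_ker, Nat.gcd_eq_right N.card_subgroup_dvd_card]

theorem con_eq_ker_powMonoidHom_natCard_subgroup (c : Con G) :
    c = Con.ker (powMonoidHom (Nat.card c.subgroup) : G →* G) :=
  calc c = QuotientGroup.con c.subgroup := (QuotientGroup.con_subgroup c).symm
    _ = QuotientGroup.con (powMonoidHom (Nat.card c.subgroup) : G →* G).ker := by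
      congr 1
      exact subgroup_eq_ker_powMonoidHom_natCard c.subgroup
    _ = Con.ker (powMonoidHom (Nat.card c.subgroup) : G →* G) :=
      QuotientGroup.con_ker_eq_conKer _

theorem bijOn_ker_powMonoidHom_prime_pow (hp : p.Prime) (hG : Nat.card G = p ^ n) :
    Set.BijOn (fun j => Con.ker (powMonoidHom (p ^ j) : G →* G)) (Set.Iic n) Set.univ := by
  have card_ker {j : ℕ} (hj : j ≤ n) :
      Nat.card (Con.ker (powMonoidHom (p ^ j) : G →* G)).subgroup = p ^ j := by
    rw [← QuotientGroup.con_ker_eq_conKer, Con.subgroup_quotientGroupCon,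
      IsCyclic.card_powMonoidHom_ker, hG, Nat.gcd_eq_right (pow_dvd_pow p hj)]
  refine ⟨Set.mapsTo_univ _ _, fun j hj k hk h => ?_, fun c _ => ?_⟩
  · refine Nat.pow_right_injective hp.two_le ?_
    calc p ^ j = Nat.card (Con.ker (powMonoidHom (p ^ j) : G →* G)).subgroup := (card_ker hj).symm
      _ = Nat.card (Con.ker (powMonoidHom (p ^ k) : G →* G)).subgroup :=
        congrArg (fun c : Con G => Nat.card c.subgroup) h
      _ = p ^ k := card_ker hk
  · obtain ⟨j, hj, hcard⟩ :=
      (Nat.dvd_prime_pow hp).1 (hG ▸ c.subgroup.card_subgroup_dvd_card)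
    refine ⟨j, hj, ?_⟩
    change Con.ker (powMonoidHom (p ^ j) : G →* G) = c
    rw [← hcard, ← con_eq_ker_powMonoidHom_natCard_subgroup]

theorem ncard_setOf_con_apply_one (hp : p.Prime) (hG : Nat.card G = p ^ n) {γ : G}
    (hγ : orderOf γ = p ^ t) : {c : Con G | c γ 1}.ncard = n + 1 - t := by
  have hbij := (bijOn_ker_powMonoidHom_prime_pow hp hG).subset_right
    (Set.subset_univ {c : Con G | c γ 1})
  have hset : Set.Iic n ∩ (fun j => Con.ker (powMonoidHom (p ^ j) : G →* G)) ⁻¹'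
      {c : Con G | c γ 1} = Finset.Icc t n := by
    ext j
    simp [ker_powMonoidHom_prime_pow_apply_one_iff hp hγ, and_comm]
  rw [← hbij.ncard_eq, hset, Set.ncard_coe_finset, Nat.card_Icc]

theorem ncard_setOf_not_con_apply_one (hp : p.Prime) (hG : Nat.card G = p ^ n) {γ : G}
    (hγ : orderOf γ = p ^ t) : {c : Con G | ¬c γ 1}.ncard = t := by
  have ht : t ≤ n := (Nat.pow_dvd_pow_iff_le_right hp.one_lt).1 (hγ ▸ hG ▸ orderOf_dvd_natCard γ)
  have hbij := (bijOn_ker_powMonoidHom_prime_pow hp hG).subset_right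
    (Set.subset_univ {c : Con G | ¬c γ 1})
  have hset : Set.Iic n ∩ (fun j => Con.ker (powMonoidHom (p ^ j) : G →* G)) ⁻¹'
      {c : Con G | ¬c γ 1} = Finset.range t := by
    ext j
    simp only [Set.mem_inter_iff, Set.mem_Iic, Set.mem_preimage, Set.mem_ofPred_eq,
      ker_powMonoidHom_prime_pow_apply_one_iff hp hγ, Finset.coe_range, Set.mem_Iio]
    omega
  rw [← hbij.ncard_eq, hset, Set.ncard_coe_finset, Finset.card_range]

end Cyclic

theorem exists_finite_commGroup_ncard_con (s t : ℕ) :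
    ∃ (G : Type) (_ : CommGroup G) (_ : Finite G) (γ : G),
      {c : Con G | c γ 1}.ncard = s + 1 ∧ {c : Con G | ¬c γ 1}.ncard = t := by
  let G := Multiplicative (ZMod (2 ^ (s + t)))
  have hG : Nat.card G = 2 ^ (s + t) := by simp [G]
  have : Finite G := Nat.finite_of_card_ne_zero (by simp)
  obtain ⟨g, hg⟩ := IsCyclic.exists_ofOrder_eq_natCard (α := G)
  have hγ : orderOf (g ^ 2 ^ s) = 2 ^ t := by
    rw [orderOf_pow_of_dvd (by positivity) (by rw [hg, hG, pow_add]; exact dvd_mul_right _ _), hg,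
      hG, pow_add, Nat.mul_div_cancel_left _ (by positivity)]
  refine ⟨G, inferInstance, this, g ^ 2 ^ s, ?_, ncard_setOf_not_con_apply_one Nat.prime_two hG hγ⟩
  rw [ncard_setOf_con_apply_one Nat.prime_two hG hγ]
  omega

theorem sub_add_mul_div_sub_add_mul {K : Type*} [Field K] (a b : K) {x y : K} (hxy : x ≠ y) :
    (a * y - b * x + (b - a) * x) / (a * y - b * x + (b - a) * y) = a / b :=
  calc (a * y - b * x + (b - a) * x) / (a * y - b * x + (b - a) * y)
      = a * (y - x) / (b * (y - x)) := by ring_nf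
    _ = a / b := mul_div_mul_right a b (sub_ne_zero.2 hxy.symm)

theorem exists_finite_semigroup_chiSemigroup_eq_div {a b : ℕ} (ha : 0 < a) (hab : a < b) :
    ∃ (S : Type) (_ : Semigroup S), Finite S ∧ chiSemigroup S = a / b := by
  have : NeZero b := ⟨by omega⟩
  set B := {R : Fin b → Fin b → Prop | Equivalence R}.ncard with hB
  set E := {R : Fin b → Fin b → Prop | Std.Refl R}.ncard with hE
  have hbB : b ≤ B := by simpa using natCard_le_ncard_equivalence (Fin b)
  have hBE : b * B ^ 2 ≤ E ^ 2 := by simpa using natCard_mul_ncard_equivalence_sq_le (Fin b)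
  have hlt : B ^ 2 < E ^ 2 := by nlinarith
  have hle : b * B ^ 2 ≤ a * E ^ 2 := hBE.trans (Nat.le_mul_of_pos_left _ ha)
  obtain ⟨G, _, _, γ, hm, ht⟩ :=
    exists_finite_commGroup_ncard_con (b - a - 1) (a * E ^ 2 - b * B ^ 2)
  refine ⟨ReesMatrix (ReesMatrix.diagonalSandwich (0 : Fin b) γ), inferInstance, inferInstance, ?_⟩
  rw [ReesMatrix.chiSemigroup_diagonalSandwich, hm, ht, ← hB, ← hE,
    Nat.sub_add_cancel (Nat.sub_pos_of_lt hab)]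
  push_cast [hle, hab.le]
  exact sub_add_mul_div_sub_add_mul _ _ (by exact_mod_cast hlt.ne)

/-- For every rational `α` with `0 < α ≤ 1` there is a finite semigroup `S`
with `χ(S) = α`. -/
theorem stmt1 (α : ℚ) (h0 : 0 < α) (h1 : α ≤ 1) :
    ∃ (S : Type) (inst : Semigroup S), Finite S ∧ @chiSemigroup S inst = α := by
  rcases h1.eq_or_lt with rfl | hlt
  · exact ⟨Unit, inferInstance, inferInstance, chiSemigroup_eq_one_of_finite_group Unit⟩
  · lift α to ℚ≥0 using h0.le
    have hnum : 0 < α.num := NNRat.num_pos.2 (by exact_mod_cast h0)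
    have hdiv : (α.num : ℚ) / α.den = α := by exact_mod_cast congrArg NNRat.cast α.num_div_den
    have hnum_lt : α.num < α.den := by
      rw [← hdiv, div_lt_one (by exact_mod_cast α.den_pos)] at hlt
      exact_mod_cast hlt
    obtain ⟨S, inst, hS, hχ⟩ := exists_finite_semigroup_chiSemigroup_eq_div hnum hnum_lt
    exact ⟨S, inst, hS, hχ.trans hdiv⟩
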